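/- arXiv:math/0609287 — 4 statements merged into one kernel-verified Lean document; each statement's English description precedes it below -/
import Mathlib

section
/- Let ψ : Ω[B₁⁄R] ⊗[B₁] B₂ → Ω[B₂⁄R] be the unique B₂-linear map satisfying ψ(d b ⊗ 1) = d(φ(b)) for all b ∈ B₁, and suppose there exists a connection ∇ in φ. Then the unique B₂-linear map i_∇ : Ω[B₂⁄R] → Ω[B₁⁄R] ⊗[B₁] B₂ satisfying i_∇ ∘ d = ∇ is a left inverse of ψ (i.e. i_∇ ∘ ψ = id). In particular ψ is injective, so Ω[B₁⁄R] ⊗[B₁] B₂ is isomorphic as a B₂-module to its image ψ(Ω[B₁⁄R] ⊗[B₁] B₂) ⊆ Ω[B₂⁄R]. -/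
open TensorProduct

/-- The ring homomorphism `End R N →+* End R (M ⊗[R] N)`, `f ↦ id ⊗ f`. -/
noncomputable def lTensorEndHom (R M N : Type*) [CommSemiring R] [AddCommMonoid M]
    [AddCommMonoid N] [Module R M] [Module R N] :
    Module.End R N →+* Module.End R (M ⊗[R] N) where
  toFun f := LinearMap.lTensor M f
  map_one' := LinearMap.lTensor_id M N
  map_mul' f g := LinearMap.lTensor_comp M f g
  map_zero' := LinearMap.lTensor_zero M
  map_add' f g := LinearMap.lTensor_add M f g

/-- `M ⊗[R] N` is a module over `S`, with `S` acting through the right factor `N`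
(for us: `Ω[B₁⁄R] ⊗[B₁] B₂` is a `B₂`-module via multiplication on the right factor). -/
noncomputable instance (priority := 100) TensorProduct.rightFactorModule
    {R M N S : Type*} [CommSemiring R] [AddCommMonoid M] [AddCommMonoid N]
    [Module R M] [Module R N] [Semiring S] [Module S N] [SMulCommClass S R N] :
    Module S (M ⊗[R] N) :=
  Module.compHom _ ((lTensorEndHom R M N).comp (Module.toModuleEnd R N))

/-!
The elements `d b ⊗ 1` generate `Ω[B₁⁄R] ⊗[B₁] B₂` over `B₂`, because the `d b` generate
`Ω[B₁⁄R]` over `B₁` and scalars from `B₁` move across the tensor product into `B₂`.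
On these generators `i_∇ (ψ (d b ⊗ 1)) = i_∇ (d (φ b)) = ∇ (φ b) = d b ⊗ 1`.
-/

section RightFactor

variable {R M N S : Type*} [CommSemiring R] [AddCommMonoid M] [AddCommMonoid N]
  [Module R M] [Module R N] [Semiring S] [Module S N] [SMulCommClass S R N]

theorem rightFactor_smul_tmul (c : S) (m : M) (n : N) :
    c • (m ⊗ₜ[R] n) = m ⊗ₜ[R] (c • n) :=
  rfl

theorem tmul_mem_span_image2_tmul_of_mem_left {s : Set M} {t : Set N} {m : M} (hm : m ∈ s)
    {n : N} (hn : n ∈ Submodule.span S t) :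
    m ⊗ₜ[R] n ∈ Submodule.span S (Set.image2 (· ⊗ₜ[R] ·) s t) := by
  induction hn using Submodule.span_induction with
  | mem y hy => exact Submodule.subset_span (Set.mem_image2_of_mem hm hy)
  | zero => simp only [TensorProduct.tmul_zero, zero_mem]
  | add y z _ _ hy hz => simpa only [TensorProduct.tmul_add] using add_mem hy hz
  | smul c y _ hy => simpa only [rightFactor_smul_tmul] using Submodule.smul_mem _ c hy

theorem tmul_mem_span_image2_tmul {s : Set M} {t : Set N} {m : M}
    (hm : m ∈ Submodule.span R s) (ht : Submodule.span S t = ⊤) (n : N) :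
    m ⊗ₜ[R] n ∈ Submodule.span S (Set.image2 (· ⊗ₜ[R] ·) s t) := by
  induction hm using Submodule.span_induction generalizing n with
  | mem x hx => exact tmul_mem_span_image2_tmul_of_mem_left hx (ht ▸ Submodule.mem_top)
  | zero => simp only [TensorProduct.zero_tmul, zero_mem]
  | add x y _ _ hx hy => simpa only [TensorProduct.add_tmul] using add_mem (hx n) (hy n)
  | smul a x _ hx => simpa only [TensorProduct.smul_tmul] using hx (a • n)

theorem span_image2_tmul_eq_top {s : Set M} {t : Set N}
    (hs : Submodule.span R s = ⊤) (ht : Submodule.span S t = ⊤) :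
    Submodule.span S (Set.image2 (· ⊗ₜ[R] ·) s t) = ⊤ := by
  refine Submodule.eq_top_iff'.2 fun z => ?_
  induction z using TensorProduct.induction_on with
  | zero => exact zero_mem _
  | tmul m n => exact tmul_mem_span_image2_tmul (hs ▸ Submodule.mem_top) ht n
  | add x y hx hy => exact add_mem hx hy

end RightFactor

theorem span_range_D_tmul_one_eq_top (R B₁ B₂ : Type*) [CommRing R] [CommRing B₁]
    [Semiring B₂] [Algebra R B₁] [Algebra B₁ B₂] :
    Submodule.span B₂ (Set.range fun b : B₁ =>
      KaehlerDifferential.D R B₁ b ⊗ₜ[B₁] (1 : B₂)) = ⊤ := by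
  have h := span_image2_tmul_eq_top (KaehlerDifferential.span_range_derivation R B₁)
    (Ideal.span_singleton_one (α := B₂))
  rwa [Set.image2_singleton_right, ← Set.range_comp] at h

/-- Let `ψ : Ω[B₁⁄R] ⊗[B₁] B₂ → Ω[B₂⁄R]` be the unique `B₂`-linear map
with `ψ (d b ⊗ 1) = d (φ b)` for all `b ∈ B₁` (`φ = algebraMap B₁ B₂`), and suppose there
is a connection `∇` in `φ`, i.e. an `R`-derivation `nab : B₂ → Ω[B₁⁄R] ⊗[B₁] B₂` with
`nab (φ b) = d b ⊗ 1`.  Then the unique `B₂`-linear map `i_nab : Ω[B₂⁄R] → Ω[B₁⁄R] ⊗[B₁] B₂`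
with `i_nab ∘ d = nab` is a left inverse of `ψ`; in particular `ψ` is injective, and
`Ω[B₁⁄R] ⊗[B₁] B₂` is `B₂`-isomorphic to the image of `ψ` in `Ω[B₂⁄R]`. -/
theorem statement1 (R B₁ B₂ : Type*) [CommRing R] [CommRing B₁] [CommRing B₂]
    [Algebra R B₁] [Algebra R B₂] [Algebra B₁ B₂] [IsScalarTower R B₁ B₂]
    (ψ : (KaehlerDifferential R B₁ ⊗[B₁] B₂) →ₗ[B₂] KaehlerDifferential R B₂)
    (hψ : ∀ b : B₁, ψ (KaehlerDifferential.D R B₁ b ⊗ₜ[B₁] (1 : B₂)) =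
      KaehlerDifferential.D R B₂ (algebraMap B₁ B₂ b))
    (nab : Derivation R B₂ (KaehlerDifferential R B₁ ⊗[B₁] B₂))
    (hnab : ∀ b : B₁, nab (algebraMap B₁ B₂ b) =
      KaehlerDifferential.D R B₁ b ⊗ₜ[B₁] (1 : B₂))
    (inab : KaehlerDifferential R B₂ →ₗ[B₂] (KaehlerDifferential R B₁ ⊗[B₁] B₂))
    (hinab : ∀ c : B₂, inab (KaehlerDifferential.D R B₂ c) = nab c) :
    inab.comp ψ = LinearMap.id ∧ Function.Injective ψ ∧
      Nonempty ((KaehlerDifferential R B₁ ⊗[B₁] B₂) ≃ₗ[B₂] LinearMap.range ψ) := by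
  have hcomp : inab.comp ψ = LinearMap.id :=
    LinearMap.ext_on_range (span_range_D_tmul_one_eq_top R B₁ B₂) fun b =>
      calc inab (ψ (KaehlerDifferential.D R B₁ b ⊗ₜ[B₁] (1 : B₂)))
          = inab (KaehlerDifferential.D R B₂ (algebraMap B₁ B₂ b)) := by rw [hψ]
        _ = nab (algebraMap B₁ B₂ b) := hinab _
        _ = KaehlerDifferential.D R B₁ b ⊗ₜ[B₁] (1 : B₂) := hnab b
  have hleft : Function.LeftInverse inab ψ := LinearMap.congr_fun hcomp
  exact ⟨hcomp, hleft.injective, ⟨LinearEquiv.ofLeftInverse hleft⟩⟩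
end

section
/- Let B₁, B₂, B₃ be commutative R-algebras, φ' : B₁ → B₂ and φ : B₂ → B₃ R-algebra homomorphisms, ∇' a connection in φ' and ∇ a connection in φ. Let id ⊗ φ : Ω[B₁⁄R] ⊗[B₁] B₂ → Ω[B₁⁄R] ⊗[B₁] B₃ be the map induced by φ (where B₂ is a B₁-module via φ' and B₃ is a B₁-module via φ ∘ φ'), and let ψ̄ : Ω[B₂⁄R] ⊗[B₂] B₃ → Ω[B₁⁄R] ⊗[B₁] B₃ be the unique B₃-linear map satisfying ψ̄(d b ⊗ 1) = (id ⊗ φ)(∇'(b)) for all b ∈ B₂. Then the composition □ := ψ̄ ∘ ∇ : B₃ → Ω[B₁⁄R] ⊗[B₁] B₃ is a connection in φ ∘ φ' : B₁ → B₃, i.e. □ is an R-derivation and □((φ ∘ φ')(b)) = d b ⊗ 1 for all b ∈ B₁. -/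
open TensorProduct

/-!
A connection `nab'` in `φ'` extends the universal derivation of `B₁`, so `ψbar` is a retraction of
the canonical map `Ω[B₁⁄R] ⊗[B₁] B₃ → Ω[B₂⁄R] ⊗[B₂] B₃`: it sends `d (φ' b) ⊗ 1` back to `d b ⊗ 1`.
Pushing a connection in `φ` forward along such a retraction gives a connection in `φ ∘ φ'`.
-/

-- Makes `S`-linear maps between such tensor products `R`-linear, as `LinearMap.compDer` requires.
instance rightFactor_isScalarTower {R A M N S : Type*} [Semiring R] [CommSemiring A]
    [AddCommMonoid M] [AddCommMonoid N] [Module A M] [Module A N] [Module R M]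
    [SMulCommClass A R M] [Semiring S] [Module S N] [SMulCommClass S A N] [SMul R S]
    [DistribMulAction R N] [IsScalarTower R S N] [TensorProduct.CompatibleSMul A R M N] :
    IsScalarTower R S (M ⊗[A] N) where
  smul_assoc r s x := by
    induction x with
    | zero => simp only [smul_zero]
    | add x y hx hy => simp only [smul_add, hx, hy]
    | tmul m n =>
      calc
        (r • s) • m ⊗ₜ[A] n = m ⊗ₜ[A] ((r • s) • n) := rfl
        _ = (r • m) ⊗ₜ[A] (s • n) := by rw [smul_assoc, TensorProduct.smul_tmul]
        _ = r • s • m ⊗ₜ[A] n := rfl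

section Connection

variable {R B C : Type*} [CommRing R] [CommRing B] [CommRing C] [Algebra R B] [Algebra R C]
  [Algebra B C]

/-- A connection in the structure map `B → C`: an `R`-derivation of `C` with values in
`Ω[B⁄R] ⊗[B] C` that extends `b ↦ d b ⊗ 1`. -/
def IsConnection (nab : Derivation R C (Ω[B⁄R] ⊗[B] C)) : Prop :=
  ∀ b : B, nab (algebraMap B C b) = KaehlerDifferential.D R B b ⊗ₜ[B] (1 : C)

theorem IsConnection.compDer {A : Type*} [CommRing A] [Algebra R A] [Algebra A B] [Algebra A C]
    [IsScalarTower A B C] [IsScalarTower R A C] [IsScalarTower R B C]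
    {nab : Derivation R C (Ω[B⁄R] ⊗[B] C)} (hnab : IsConnection nab)
    (ψ : (Ω[B⁄R] ⊗[B] C) →ₗ[C] (Ω[A⁄R] ⊗[A] C))
    (hψ : ∀ a : A, ψ (KaehlerDifferential.D R B (algebraMap A B a) ⊗ₜ[B] (1 : C)) =
      KaehlerDifferential.D R A a ⊗ₜ[A] (1 : C)) :
    IsConnection (ψ.compDer nab) := fun a =>
  calc
    ψ (nab (algebraMap A C a)) = ψ (nab (algebraMap B C (algebraMap A B a))) := by
      rw [IsScalarTower.algebraMap_apply A B C]
    _ = ψ (KaehlerDifferential.D R B (algebraMap A B a) ⊗ₜ[B] (1 : C)) := by rw [hnab]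
    _ = KaehlerDifferential.D R A a ⊗ₜ[A] (1 : C) := hψ a

end Connection

/-- Let `φ' = algebraMap B₁ B₂`, `φ = algebraMap B₂ B₃` (so that
`φ ∘ φ' = algebraMap B₁ B₃`), let `nab'` be a connection in `φ'` and `nab` a connection
in `φ`.  Let `F = id ⊗ φ : Ω[B₁⁄R] ⊗[B₁] B₂ → Ω[B₁⁄R] ⊗[B₁] B₃` be the map induced by
`φ`, and let `ψbar : Ω[B₂⁄R] ⊗[B₂] B₃ → Ω[B₁⁄R] ⊗[B₁] B₃` be the unique `B₃`-linear map
with `ψbar (d b ⊗ 1) = F (nab' b)` for `b ∈ B₂`.  Then `ψbar ∘ nab : B₃ → Ω[B₁⁄R] ⊗[B₁] B₃`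
is a connection in `φ ∘ φ'`: it is an `R`-derivation and sends `(φ ∘ φ') b` to `d b ⊗ 1`. -/
theorem statement4 (R B₁ B₂ B₃ : Type*) [CommRing R]
    [CommRing B₁] [CommRing B₂] [CommRing B₃]
    [Algebra R B₁] [Algebra R B₂] [Algebra R B₃]
    [Algebra B₁ B₂] [Algebra B₂ B₃] [Algebra B₁ B₃]
    [IsScalarTower R B₁ B₂] [IsScalarTower R B₂ B₃] [IsScalarTower R B₁ B₃]
    [IsScalarTower B₁ B₂ B₃]
    (nab' : Derivation R B₂ (KaehlerDifferential R B₁ ⊗[B₁] B₂))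
    (hnab' : ∀ b : B₁, nab' (algebraMap B₁ B₂ b) =
      KaehlerDifferential.D R B₁ b ⊗ₜ[B₁] (1 : B₂))
    (nab : Derivation R B₃ (KaehlerDifferential R B₂ ⊗[B₂] B₃))
    (hnab : ∀ b : B₂, nab (algebraMap B₂ B₃ b) =
      KaehlerDifferential.D R B₂ b ⊗ₜ[B₂] (1 : B₃))
    (F : (KaehlerDifferential R B₁ ⊗[B₁] B₂) →+ (KaehlerDifferential R B₁ ⊗[B₁] B₃))
    (hF : ∀ (ξ : KaehlerDifferential R B₁) (b : B₂),
      F (ξ ⊗ₜ[B₁] b) = ξ ⊗ₜ[B₁] (algebraMap B₂ B₃ b))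
    (ψbar : (KaehlerDifferential R B₂ ⊗[B₂] B₃) →ₗ[B₃]
      (KaehlerDifferential R B₁ ⊗[B₁] B₃))
    (hψbar : ∀ b : B₂,
      ψbar (KaehlerDifferential.D R B₂ b ⊗ₜ[B₂] (1 : B₃)) = F (nab' b)) :
    ∃ sq : Derivation R B₃ (KaehlerDifferential R B₁ ⊗[B₁] B₃),
      (∀ c : B₃, sq c = ψbar (nab c)) ∧
      (∀ b : B₁, sq (algebraMap B₁ B₃ b) =
        KaehlerDifferential.D R B₁ b ⊗ₜ[B₁] (1 : B₃)) := by
  have hretract : ∀ b : B₁,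
      ψbar (KaehlerDifferential.D R B₂ (algebraMap B₁ B₂ b) ⊗ₜ[B₂] (1 : B₃)) =
        KaehlerDifferential.D R B₁ b ⊗ₜ[B₁] (1 : B₃) := fun b => by
    rw [hψbar, hnab', hF, map_one]
  exact ⟨ψbar.compDer nab, fun _ => rfl, IsConnection.compDer hnab ψbar hretract⟩
end

section
/- The antisymmetric part of the generalized Christoffel symbols of τ is determined by the antisymmetric part ω of τ: for all indices α, μ, β and all x ∈ U, T^α_{μβ} := Γ^α_{μβ} − Γ^α_{βμ} = Σ_δ g^{αδ} (∂_μ ω_{βδ} + ∂_β ω_{δμ} + ∂_δ ω_{μβ}) (which equals 3 g^{αδ} ∂_{[μ} ω_{βδ]}, the totally antisymmetrized derivative of ω). -/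
open scoped BigOperators

/-- The partial derivative `∂_μ f` of `f : ℝⁿ → ℝ` in the `μ`-th coordinate direction. -/
noncomputable def pd {n : ℕ} (μ : Fin n) (f : (Fin n → ℝ) → ℝ) (x : Fin n → ℝ) : ℝ :=
  fderiv ℝ f x (Pi.single μ 1)

/-- The symmetric part `g_{μν} = (τ_{μν} + τ_{νμ})/2` of `τ`. -/
noncomputable def gPart {n : ℕ} (τ : (Fin n → ℝ) → Matrix (Fin n) (Fin n) ℝ)
    (x : Fin n → ℝ) : Matrix (Fin n) (Fin n) ℝ :=
  fun μ ν => (τ x μ ν + τ x ν μ) / 2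

/-- The antisymmetric part `ω_{μν} = (τ_{μν} - τ_{νμ})/2` of `τ`. -/
noncomputable def wPart {n : ℕ} (τ : (Fin n → ℝ) → Matrix (Fin n) (Fin n) ℝ)
    (x : Fin n → ℝ) : Matrix (Fin n) (Fin n) ℝ :=
  fun μ ν => (τ x μ ν - τ x ν μ) / 2

/-- The entries `g^{μν}` of the inverse matrix `g(x)⁻¹`. -/
noncomputable def gInv {n : ℕ} (τ : (Fin n → ℝ) → Matrix (Fin n) (Fin n) ℝ)
    (x : Fin n → ℝ) : Matrix (Fin n) (Fin n) ℝ :=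
  (gPart τ x)⁻¹

/-- The generalized Christoffel symbols
`Γ^α_{μβ} = (1/2) Σ_δ g^{αδ} (∂_μ τ_{βδ} + ∂_β τ_{δμ} − ∂_δ τ_{βμ})` of `τ`. -/
noncomputable def GammaT {n : ℕ} (τ : (Fin n → ℝ) → Matrix (Fin n) (Fin n) ℝ)
    (α μ β : Fin n) (x : Fin n → ℝ) : ℝ :=
  (1 / 2) * ∑ δ, gInv τ x α δ *
    (pd μ (fun y => τ y β δ) x + pd β (fun y => τ y δ μ) x - pd δ (fun y => τ y β μ) x)

/-- The classical Christoffel symbols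
`Γg^α_{μβ} = (1/2) Σ_δ g^{αδ} (∂_μ g_{βδ} + ∂_β g_{δμ} − ∂_δ g_{βμ})`
of the symmetric part `g` of `τ`. -/
noncomputable def GammaG {n : ℕ} (τ : (Fin n → ℝ) → Matrix (Fin n) (Fin n) ℝ)
    (α μ β : Fin n) (x : Fin n → ℝ) : ℝ :=
  (1 / 2) * ∑ δ, gInv τ x α δ *
    (pd μ (fun y => gPart τ y β δ) x + pd β (fun y => gPart τ y δ μ) x -
      pd δ (fun y => gPart τ y β μ) x)

/-- The Christoffel symbols of the first kind
`Γ_{δμβ} = (∂_μ τ_{βδ} + ∂_β τ_{δμ} − ∂_δ τ_{βμ}) / 2` of `τ`. Raising the first index `δ` with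
`g^{αδ}` gives `GammaT`. -/
noncomputable def christoffelFirst {n : ℕ} (τ : (Fin n → ℝ) → Matrix (Fin n) (Fin n) ℝ)
    (δ μ β : Fin n) (x : Fin n → ℝ) : ℝ :=
  (pd μ (fun y => τ y β δ) x + pd β (fun y => τ y δ μ) x - pd δ (fun y => τ y β μ) x) / 2

/-- The cyclic sum `∂_μ A_{βδ} + ∂_β A_{δμ} + ∂_δ A_{μβ}` of first derivatives of a matrix field
`A`. When `A` is antisymmetric this is the component `(dA)_{μβδ}` of the exterior derivative of
the 2-form `½ A_{μν} dx^μ ∧ dx^ν`, that is `3 ∂_{[μ} A_{βδ]}`. -/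
noncomputable def cyclicDeriv {n : ℕ} (A : (Fin n → ℝ) → Matrix (Fin n) (Fin n) ℝ)
    (μ β δ : Fin n) (x : Fin n → ℝ) : ℝ :=
  pd μ (fun y => A y β δ) x + pd β (fun y => A y δ μ) x + pd δ (fun y => A y μ β) x

section

variable {n : ℕ} {x : Fin n → ℝ}

theorem pd_sub {f g : (Fin n → ℝ) → ℝ} (hf : DifferentiableAt ℝ f x)
    (hg : DifferentiableAt ℝ g x) (μ : Fin n) :
    pd μ (fun y => f y - g y) x = pd μ f x - pd μ g x := by
  rw [pd, fderiv_fun_sub hf hg, sub_apply, pd, pd]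

theorem pd_div_const (f : (Fin n → ℝ) → ℝ) (c : ℝ) (μ : Fin n) :
    pd μ (fun y => f y / c) x = pd μ f x / c := by
  have h_smul : (fun y => f y / c) = c⁻¹ • f := funext fun y => div_eq_inv_mul (f y) c
  rw [pd, h_smul, fderiv_const_smul_field, Pi.smul_apply, smul_apply, smul_eq_mul, pd,
    div_eq_inv_mul]

variable {τ : (Fin n → ℝ) → Matrix (Fin n) (Fin n) ℝ}

theorem pd_wPart {μ ν : Fin n} (hμν : DifferentiableAt ℝ (fun y => τ y μ ν) x)
    (hνμ : DifferentiableAt ℝ (fun y => τ y ν μ) x) (ρ : Fin n) :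
    pd ρ (fun y => wPart τ y μ ν) x =
      (pd ρ (fun y => τ y μ ν) x - pd ρ (fun y => τ y ν μ) x) / 2 := by
  simp only [wPart, pd_div_const, pd_sub hμν hνμ]

theorem GammaT_eq_sum_gInv_mul_christoffelFirst (α μ β : Fin n) :
    GammaT τ α μ β x = ∑ δ, gInv τ x α δ * christoffelFirst τ δ μ β x := by
  rw [GammaT, Finset.mul_sum]
  refine Finset.sum_congr rfl fun δ _ => ?_
  rw [christoffelFirst]
  ring

-- Swapping `μ` and `β` turns the three terms `∂_μ τ_{βδ}`, `∂_β τ_{δμ}`, `∂_δ τ_{βμ}` into the same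
-- derivatives of the transposed entries, so the difference only sees `τ - τᵀ`.
theorem christoffelFirst_sub_swap (hτ : ∀ μ ν, DifferentiableAt ℝ (fun y => τ y μ ν) x)
    (δ μ β : Fin n) :
    christoffelFirst τ δ μ β x - christoffelFirst τ δ β μ x = cyclicDeriv (wPart τ) μ β δ x := by
  simp only [christoffelFirst, cyclicDeriv, pd_wPart (hτ _ _) (hτ _ _)]
  ring

theorem statement5_general (hτ : ∀ μ ν, DifferentiableAt ℝ (fun y => τ y μ ν) x)
    (_hg : IsUnit (gPart τ x).det) (α μ β : Fin n) :
    GammaT τ α μ β x - GammaT τ α β μ x =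
      ∑ δ, gInv τ x α δ * cyclicDeriv (wPart τ) μ β δ x := by
  simp only [GammaT_eq_sum_gInv_mul_christoffelFirst, ← Finset.sum_sub_distrib, ← mul_sub,
    christoffelFirst_sub_swap hτ]

end

/-- The antisymmetric part of the generalized Christoffel symbols of `τ`
is determined by the antisymmetric part `ω` of `τ`:
`T^α_{μβ} = Γ^α_{μβ} − Γ^α_{βμ} = Σ_δ g^{αδ} (∂_μ ω_{βδ} + ∂_β ω_{δμ} + ∂_δ ω_{μβ})`
(which equals `3 g^{αδ} ∂_{[μ} ω_{βδ]}`). -/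
theorem statement5 (n : ℕ) (hn : 1 ≤ n) (U : Set (Fin n → ℝ)) (hU : IsOpen U)
    (τ : (Fin n → ℝ) → Matrix (Fin n) (Fin n) ℝ)
    (hτ : ∀ μ ν : Fin n, ContDiffOn ℝ (⊤ : ℕ∞) (fun x => τ x μ ν) U)
    (hg : ∀ x ∈ U, IsUnit (gPart τ x).det) :
    ∀ (α μ β : Fin n), ∀ x ∈ U,
      GammaT τ α μ β x - GammaT τ α β μ x =
        ∑ δ, gInv τ x α δ *
          (pd μ (fun y => wPart τ y β δ) x + pd β (fun y => wPart τ y δ μ) x +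
            pd δ (fun y => wPart τ y μ β) x) :=
  fun α μ β x hx => statement5_general
    (fun μ ν => ((hτ μ ν).contDiffAt (hU.mem_nhds hx)).differentiableAt (by simp)) (hg x hx) α μ β
end

section
/- Geodesics of the generalized Levi-Civita connection of τ coincide with geodesics of its symmetric part g: let I ⊆ ℝ be an open interval and χ : I → U a smooth curve with components χ^μ. Then χ satisfies the geodesic equation of Γ, namely (d²χ^μ/dt²)(t) + Σ_{ρ,α} Γ^μ_{ρα}(χ(t)) (dχ^ρ/dt)(t) (dχ^α/dt)(t) = 0 for all t ∈ I and all μ, if and only if χ satisfies the geodesic equation of the Christoffel symbols Γg of g, namely (d²χ^μ/dt²)(t) + Σ_{ρ,α} Γg^μ_{ρα}(χ(t)) (dχ^ρ/dt)(t) (dχ^α/dt)(t) = 0 for all t ∈ I and all μ, where Γg^α_{μβ} := (1/2) Σ_δ g^{αδ} (∂_μ g_{βδ} + ∂_β g_{δμ} − ∂_δ g_{βμ}). -/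
open scoped BigOperators

/-!
Splitting `τ = g + ω` gives `Γ^α_{μβ} = Γg^α_{μβ} + (1/2) Σ_δ g^{αδ} (dω)_{μβδ}`, because the
antisymmetry of `ω` turns the Christoffel combination of its derivatives into the cyclic sum `dω`.
The correction is antisymmetric in `μ` and `β`, so the geodesic equation, in which the lower indices
are contracted with the same velocity twice, does not see it.
-/

theorem sum_sum_eq_zero_of_antisymm {ι M : Type*} [Fintype ι] [AddCommGroup M]
    [IsAddTorsionFree M] {F : ι → ι → M} (hF : ∀ i j, F i j = -F j i) :
    ∑ i, ∑ j, F i j = 0 := by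
  refine self_eq_neg.mp ?_
  calc ∑ i, ∑ j, F i j = ∑ j, ∑ i, F i j := Finset.sum_comm
    _ = ∑ j, ∑ i, -F j i := by simp only [← hF]
    _ = -∑ j, ∑ i, F j i := by simp only [Finset.sum_neg_distrib]

section

variable {n : ℕ}

theorem pd_add {f h : (Fin n → ℝ) → ℝ} {x : Fin n → ℝ} (μ : Fin n)
    (hf : DifferentiableAt ℝ f x) (hh : DifferentiableAt ℝ h x) :
    pd μ (fun y => f y + h y) x = pd μ f x + pd μ h x := by
  simp only [pd, fderiv_fun_add hf hh, add_apply]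

theorem pd_neg (f : (Fin n → ℝ) → ℝ) (x : Fin n → ℝ) (μ : Fin n) :
    pd μ (fun y => -f y) x = -pd μ f x := by
  simp only [pd, fderiv_fun_neg, neg_apply]

variable (τ : (Fin n → ℝ) → Matrix (Fin n) (Fin n) ℝ)

theorem gPart_add_wPart (x : Fin n → ℝ) (a b : Fin n) :
    gPart τ x a b + wPart τ x a b = τ x a b := by
  simp only [gPart, wPart]
  ring

theorem wPart_antisymm (x : Fin n → ℝ) (a b : Fin n) : wPart τ x a b = -wPart τ x b a := by
  simp only [wPart]
  ring

theorem pd_wPart_antisymm (x : Fin n → ℝ) (μ a b : Fin n) :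
    pd μ (fun y => wPart τ y a b) x = -pd μ (fun y => wPart τ y b a) x := by
  simp only [← pd_neg, ← wPart_antisymm]

/-- The components `(dω)_{μβδ} = ∂_μ ω_{βδ} + ∂_β ω_{δμ} + ∂_δ ω_{μβ}` of the exterior derivative of
the antisymmetric part `ω` of `τ`, regarded as a 2-form; they measure the difference between `Γ`
and `Γg`. -/
noncomputable def wPartExtDeriv (μ β δ : Fin n) (x : Fin n → ℝ) : ℝ :=
  pd μ (fun y => wPart τ y β δ) x + pd β (fun y => wPart τ y δ μ) x +
    pd δ (fun y => wPart τ y μ β) x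

theorem wPartExtDeriv_antisymm (μ β δ : Fin n) (x : Fin n → ℝ) :
    wPartExtDeriv τ μ β δ x = -wPartExtDeriv τ β μ δ x := by
  simp only [wPartExtDeriv]
  rw [pd_wPart_antisymm τ x μ β δ, pd_wPart_antisymm τ x β δ μ, pd_wPart_antisymm τ x δ μ β]
  ring

variable {τ} {x : Fin n → ℝ}

theorem pd_gPart_add_pd_wPart (hτ : ∀ a b, DifferentiableAt ℝ (fun y => τ y a b) x)
    (μ a b : Fin n) :
    pd μ (fun y => gPart τ y a b) x + pd μ (fun y => wPart τ y a b) x =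
      pd μ (fun y => τ y a b) x := by
  have hgPart : DifferentiableAt ℝ (fun y => gPart τ y a b) x := by
    simp only [gPart]
    fun_prop
  have hwPart : DifferentiableAt ℝ (fun y => wPart τ y a b) x := by
    simp only [wPart]
    fun_prop
  simp only [← pd_add μ hgPart hwPart, gPart_add_wPart]

theorem GammaT_eq_GammaG_add (hτ : ∀ a b, DifferentiableAt ℝ (fun y => τ y a b) x)
    (α μ β : Fin n) :
    GammaT τ α μ β x =
      GammaG τ α μ β x + (1 / 2) * ∑ δ, gInv τ x α δ * wPartExtDeriv τ μ β δ x := by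
  simp only [GammaT, GammaG, ← mul_add, ← Finset.sum_add_distrib]
  congr! 3 with δ
  simp only [← pd_gPart_add_pd_wPart hτ, wPartExtDeriv, pd_wPart_antisymm τ x δ μ β]
  ring

theorem sum_GammaT_mul_mul (hτ : ∀ a b, DifferentiableAt ℝ (fun y => τ y a b) x)
    (v : Fin n → ℝ) (μ : Fin n) :
    ∑ ρ, ∑ α, GammaT τ μ ρ α x * v ρ * v α = ∑ ρ, ∑ α, GammaG τ μ ρ α x * v ρ * v α := by
  let correction (ρ α : Fin n) : ℝ := (1 / 2) * ∑ δ, gInv τ x μ δ * wPartExtDeriv τ ρ α δ x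
  have h_antisymm (ρ α : Fin n) : correction ρ α = -correction α ρ := by
    simp only [correction, wPartExtDeriv_antisymm τ ρ α, mul_neg, Finset.sum_neg_distrib]
  have h_contract : ∑ ρ, ∑ α, correction ρ α * v ρ * v α = 0 :=
    sum_sum_eq_zero_of_antisymm fun ρ α => by rw [h_antisymm]; ring
  calc ∑ ρ, ∑ α, GammaT τ μ ρ α x * v ρ * v α
      = ∑ ρ, ∑ α, (GammaG τ μ ρ α x + correction ρ α) * v ρ * v α := by
        simp only [GammaT_eq_GammaG_add hτ, correction]
    _ = ∑ ρ, ∑ α, GammaG τ μ ρ α x * v ρ * v α +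
          ∑ ρ, ∑ α, correction ρ α * v ρ * v α := by
        simp only [add_mul, Finset.sum_add_distrib]
    _ = ∑ ρ, ∑ α, GammaG τ μ ρ α x * v ρ * v α := by rw [h_contract, add_zero]

end

theorem statement9_general {n : ℕ} {U : Set (Fin n → ℝ)} (hU : IsOpen U)
    {τ : (Fin n → ℝ) → Matrix (Fin n) (Fin n) ℝ}
    (hτ : ∀ μ ν : Fin n, DifferentiableOn ℝ (fun x => τ x μ ν) U)
    (_hg : ∀ x ∈ U, IsUnit (gPart τ x).det)
    {I : Set ℝ} (_hI : IsOpen I) {χ : ℝ → (Fin n → ℝ)} (_hχ : ContDiffOn ℝ 2 χ I)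
    (hχU : ∀ t ∈ I, χ t ∈ U) :
    (∀ t ∈ I, ∀ μ : Fin n,
        deriv (deriv fun s => χ s μ) t +
          ∑ ρ, ∑ α, GammaT τ μ ρ α (χ t) *
            deriv (fun s => χ s ρ) t * deriv (fun s => χ s α) t = 0) ↔
    (∀ t ∈ I, ∀ μ : Fin n,
        deriv (deriv fun s => χ s μ) t +
          ∑ ρ, ∑ α, GammaG τ μ ρ α (χ t) *
            deriv (fun s => χ s ρ) t * deriv (fun s => χ s α) t = 0) := by
  refine forall₃_congr fun t ht μ => ?_
  have hτχ (a b : Fin n) : DifferentiableAt ℝ (fun y => τ y a b) (χ t) :=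
    (hτ a b).differentiableAt (hU.mem_nhds (hχU t ht))
  rw [sum_GammaT_mul_mul hτχ fun ρ => deriv (fun s => χ s ρ) t]

/-- Geodesics of the generalized Levi-Civita connection of `τ` coincide
with geodesics of its symmetric part `g`: a smooth curve `χ` in `U`, defined on an open
interval `I ⊆ ℝ`, satisfies the geodesic equation of `Γ` if and only if it satisfies the
geodesic equation of the Christoffel symbols `Γg` of `g`. -/
theorem statement9 (n : ℕ) (hn : 1 ≤ n) (U : Set (Fin n → ℝ)) (hU : IsOpen U)
    (τ : (Fin n → ℝ) → Matrix (Fin n) (Fin n) ℝ)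
    (hτ : ∀ μ ν : Fin n, ContDiffOn ℝ (⊤ : ℕ∞) (fun x => τ x μ ν) U)
    (hg : ∀ x ∈ U, IsUnit (gPart τ x).det)
    (I : Set ℝ) (hI : IsOpen I) (hI' : I.OrdConnected)
    (χ : ℝ → (Fin n → ℝ)) (hχ : ContDiffOn ℝ (⊤ : ℕ∞) χ I)
    (hχU : ∀ t ∈ I, χ t ∈ U) :
    (∀ t ∈ I, ∀ μ : Fin n,
        deriv (deriv fun s => χ s μ) t +
          ∑ ρ, ∑ α, GammaT τ μ ρ α (χ t) *
            deriv (fun s => χ s ρ) t * deriv (fun s => χ s α) t = 0) ↔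
    (∀ t ∈ I, ∀ μ : Fin n,
        deriv (deriv fun s => χ s μ) t +
          ∑ ρ, ∑ α, GammaG τ μ ρ α (χ t) *
            deriv (fun s => χ s ρ) t * deriv (fun s => χ s α) t = 0) := by
  exact statement9_general hU (fun μ ν => (hτ μ ν).differentiableOn (by simp)) hg hI
    (contDiffOn_infty.mp hχ 2) hχU
end
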